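/- For every complex number q with |q| < 1, ∑_{k∈ℤ} q^{30k²}(q^{7k} − q^{17k+2}) + ∑_{k∈ℤ} q^{30k²}(q^{−13k+1} − q^{37k+11}) = H(q). (Equation (2.16): the sum of the shifted Virasoro characters φ(q)q^{−11/30}(χ^{2,1}_{5,6}(q) + χ^{2,5}_{5,6}(q)) equals H(q).) -/

import Mathlib

open scoped BigOperators

/-- The Euler function `φ(q) = ∏_{n=1}^∞ (1 - q^n)`. -/
noncomputable def eulerPhi (q : ℂ) : ℂ := ∏' n : ℕ, (1 - q ^ (n + 1))

/-- The first Rogers–Ramanujan series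
`a(q) = ∏_{n=1}^∞ 1/((1 - q^{5n-2})(1 - q^{5n-3}))`. -/
noncomputable def rrA (q : ℂ) : ℂ :=
  ∏' n : ℕ, ((1 - q ^ (5 * n + 3)) * (1 - q ^ (5 * n + 2)))⁻¹

/-- The second Rogers–Ramanujan series
`b(q) = ∏_{n=1}^∞ 1/((1 - q^{5n-1})(1 - q^{5n-4}))`. -/
noncomputable def rrB (q : ℂ) : ℂ :=
  ∏' n : ℕ, ((1 - q ^ (5 * n + 4)) * (1 - q ^ (5 * n + 1)))⁻¹

/-- `G(q) = ∏_{n=1}^∞ (1-q^{15n})(1-q^{15n-7})(1-q^{15n-8})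
          - q ∏_{n=1}^∞ (1-q^{15n})(1-q^{15n-13})(1-q^{15n-2})`. -/
noncomputable def Gf (q : ℂ) : ℂ :=
  (∏' n : ℕ, (1 - q ^ (15 * n + 15)) * (1 - q ^ (15 * n + 8)) * (1 - q ^ (15 * n + 7)))
  - q * ∏' n : ℕ, (1 - q ^ (15 * n + 15)) * (1 - q ^ (15 * n + 2)) * (1 - q ^ (15 * n + 13))

/-- `H(q) = ∏_{n=1}^∞ (1-q^{15n})(1-q^{15n-4})(1-q^{15n-11})
          + q ∏_{n=1}^∞ (1-q^{15n})(1-q^{15n-14})(1-q^{15n-1})`. -/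
noncomputable def Hf (q : ℂ) : ℂ :=
  (∏' n : ℕ, (1 - q ^ (15 * n + 15)) * (1 - q ^ (15 * n + 11)) * (1 - q ^ (15 * n + 4)))
  + q * ∏' n : ℕ, (1 - q ^ (15 * n + 15)) * (1 - q ^ (15 * n + 1)) * (1 - q ^ (15 * n + 14))

/-!
Multiplying `∏_{i < N} (1 - a p^i) (1 - b p^i)`, where `p = a b`, by the two factors with `i = N`
changes its coefficients in the theta terms `(-a)^{n(n+1)/2} (-b)^{n(n-1)/2}` by the recurrence that
the central Gaussian binomial coefficients `[2N, N + n]` obey, so these are the coefficients. They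
stay bounded and tend to `1 / (p; p)_∞`, so dominated convergence as `N → ∞` gives Jacobi's triple
product `(p; p)_∞ (a; p)_∞ (b; p)_∞ = f(-a, -b)`.

Each of the two character series consists of the even terms of one of the theta series
`f(-q^11, -q^4)` and `q f(-q, -q^14)` and the odd terms of the other, so together they sum to
`f(-q^11, -q^4) + q f(-q, -q^14)`, and the triple product turns this into `H(q)`.
-/

open Filter Finset Topology

section Triangular

/-- The triangular numbers `n(n+1)/2`, indexed by all integers; as for `pentagonal`, the value is
a natural number so that it can serve as the exponent of a possibly vanishing base. -/
def triangular (n : ℤ) : ℕ := (n * (n + 1) / 2).toNat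

theorem two_mul_natCast_triangular (n : ℤ) : 2 * (triangular n : ℤ) = n * (n + 1) := by
  have hn : 0 ≤ n * (n + 1) := by rcases n with _ | n <;> grind
  rw [triangular, Int.toNat_of_nonneg (Int.ediv_nonneg hn zero_le_two)]
  exact Int.two_mul_ediv_two_of_even n.even_mul_succ_self

theorem triangular_natCast_add_one (n : ℕ) : triangular (n + 1) = triangular n + (n + 1) := by
  grind [two_mul_natCast_triangular]

theorem triangular_neg_natCast_add_one (n : ℕ) : triangular (-(n + 1)) = triangular (-n) + n := by
  grind [two_mul_natCast_triangular]

theorem triangular_pos {n : ℤ} (h₀ : n ≠ 0) (h₁ : n ≠ -1) : 0 < triangular n := by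
  have h : n * (n + 1) ≠ 0 := mul_ne_zero h₀ (by lia)
  grind [two_mul_natCast_triangular]

end Triangular

section ThetaTerm

/-- The general term `a^{n(n+1)/2} b^{n(n-1)/2}` of Ramanujan's theta series `f(a, b)`, the second
exponent being the triangular number of index `-n`. -/
def ramanujanThetaTerm {R : Type*} [CommRing R] (a b : R) (n : ℤ) : R :=
  a ^ triangular n * b ^ triangular (-n)

section CommRing

variable {R : Type*} [CommRing R] (a b : R)

theorem ramanujanThetaTerm_zero : ramanujanThetaTerm a b 0 = 1 := by
  simp [ramanujanThetaTerm, triangular]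

theorem ramanujanThetaTerm_neg (n : ℤ) :
    ramanujanThetaTerm a b (-n) = ramanujanThetaTerm b a n := by
  rw [ramanujanThetaTerm, ramanujanThetaTerm, neg_neg, mul_comm]

theorem ramanujanThetaTerm_natCast_add_one (n : ℕ) :
    ramanujanThetaTerm a b (n + 1) = a * (a * b) ^ n * ramanujanThetaTerm a b n := by
  rw [ramanujanThetaTerm, ramanujanThetaTerm, triangular_natCast_add_one,
    triangular_neg_natCast_add_one]
  ring

end CommRing

variable {K : Type*} [Field K]

theorem ramanujanThetaTerm_add_one {a b : K} (hab : a * b ≠ 0) (n : ℤ) :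
    ramanujanThetaTerm a b (n + 1) = a * (a * b) ^ n * ramanujanThetaTerm a b n := by
  rcases n.eq_nat_or_neg with ⟨m, rfl | rfl⟩
  · exact_mod_cast ramanujanThetaTerm_natCast_add_one a b m
  · rcases m with _ | m
    · simpa using ramanujanThetaTerm_natCast_add_one a b 0
    · have hstep := ramanujanThetaTerm_natCast_add_one b a m
      have hindex : -((m + 1 : ℕ) : ℤ) + 1 = -m := by lia
      rw [hindex, ramanujanThetaTerm_neg, ramanujanThetaTerm_neg, Nat.cast_add_one, hstep,
        mul_comm b a, zpow_neg, ← Nat.cast_add_one, zpow_natCast, pow_succ]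
      field_simp [left_ne_zero_of_mul hab, right_ne_zero_of_mul hab]

theorem ramanujanThetaTerm_neg_pow_two_mul (q : K) (a b : ℕ) (k : ℤ) :
    ramanujanThetaTerm (-q ^ a) (-q ^ b) (2 * k) = q ^ (2 * (a + b) * k ^ 2 + (a - b) * k) := by
  have hpos : (triangular (2 * k) : ℤ) = 2 * k ^ 2 + k := by
    grind [two_mul_natCast_triangular]
  have hneg : (triangular (-(2 * k)) : ℤ) = 2 * k ^ 2 - k := by
    grind [two_mul_natCast_triangular]
  have hparity : Even (triangular (2 * k) + triangular (-(2 * k))) := by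
    grind
  have hexp : ((a * triangular (2 * k) + b * triangular (-(2 * k)) : ℕ) : ℤ) =
      2 * (a + b) * k ^ 2 + (a - b) * k := by
    push_cast [hpos, hneg]
    ring
  rw [ramanujanThetaTerm, neg_pow, neg_pow (q ^ b), mul_mul_mul_comm, ← pow_add,
    hparity.neg_one_pow, one_mul, ← pow_mul, ← pow_mul, ← pow_add, ← zpow_natCast, hexp]

theorem ramanujanThetaTerm_neg_pow_two_mul_add_one (q : K) (a b : ℕ) (k : ℤ) :
    ramanujanThetaTerm (-q ^ a) (-q ^ b) (2 * k + 1) =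
      -q ^ (2 * (a + b) * k ^ 2 + (3 * a + b) * k + a) := by
  have hpos : (triangular (2 * k + 1) : ℤ) = 2 * k ^ 2 + 3 * k + 1 := by
    grind [two_mul_natCast_triangular]
  have hneg : (triangular (-(2 * k + 1)) : ℤ) = 2 * k ^ 2 + k := by
    grind [two_mul_natCast_triangular]
  have hparity : Odd (triangular (2 * k + 1) + triangular (-(2 * k + 1))) := by
    grind
  have hexp : ((a * triangular (2 * k + 1) + b * triangular (-(2 * k + 1)) : ℕ) : ℤ) =
      2 * (a + b) * k ^ 2 + (3 * a + b) * k + a := by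
    push_cast [hpos, hneg]
    ring
  rw [ramanujanThetaTerm, neg_pow, neg_pow (q ^ b), mul_mul_mul_comm, ← pow_add,
    hparity.neg_one_pow, neg_one_mul, ← pow_mul, ← pow_mul, ← pow_add, ← zpow_natCast, hexp]

end ThetaTerm

section FiniteTripleProduct

/-- The finite `q`-Pochhammer symbol `(x; p)_n = ∏_{i < n} (1 - x p^i)`. -/
def qPochhammer {R : Type*} [CommRing R] (x p : R) (n : ℕ) : R := ∏ i ∈ range n, (1 - x * p ^ i)

theorem qPochhammer_succ {R : Type*} [CommRing R] (x p : R) (n : ℕ) :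
    qPochhammer x p (n + 1) = qPochhammer x p n * (1 - x * p ^ n) :=
  prod_range_succ _ n

variable {K : Type*} [Field K]

/-- The reciprocal `1 / (p; p)_m`, extended by `0` to negative `m` so that the recurrence
`1 / (p; p)_{m-1} = (1 - p^m) / (p; p)_m` holds for every integer `m`. -/
def invQPochhammer (p : K) (m : ℤ) : K := if 0 ≤ m then (qPochhammer p p m.toNat)⁻¹ else 0

theorem invQPochhammer_sub_one {p : K} (hp : ∀ i : ℕ, p ^ (i + 1) ≠ 1) (m : ℤ) :
    invQPochhammer p (m - 1) = (1 - p ^ m) * invQPochhammer p m := by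
  rcases lt_trichotomy m 0 with hm | rfl | hm
  · rw [invQPochhammer, invQPochhammer, if_neg (by lia), if_neg (by lia), mul_zero]
  · simp [invQPochhammer]
  · obtain ⟨k, rfl⟩ : ∃ k : ℕ, m = k + 1 := ⟨(m - 1).toNat, by lia⟩
    have hk : 1 - p * p ^ k ≠ 0 := by
      rw [← pow_succ']
      exact sub_ne_zero.mpr (hp k).symm
    rw [invQPochhammer, invQPochhammer, if_pos (by lia), if_pos (by lia), add_sub_cancel_right,
      ← Nat.cast_add_one, Int.toNat_natCast, Int.toNat_natCast, zpow_natCast, qPochhammer_succ,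
      pow_succ', mul_inv_rev, mul_inv_cancel_left₀ hk]

/-- The Gaussian binomial coefficient `[2N, N + n]` in base `p`, which vanishes for `N < |n|`. -/
def centralQBinom (p : K) (N : ℕ) (n : ℤ) : K :=
  qPochhammer p p (2 * N) * (invQPochhammer p (N + n) * invQPochhammer p (N - n))

theorem centralQBinom_zero (p : K) (n : ℤ) : centralQBinom p 0 n = if n = 0 then 1 else 0 := by
  rcases lt_trichotomy n 0 with hn | rfl | hn
  · simp [centralQBinom, invQPochhammer, hn, hn.ne]
  · simp [centralQBinom, invQPochhammer, qPochhammer]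
  · simp [centralQBinom, invQPochhammer, hn, hn.ne']

theorem centralQBinom_succ {p : K} (hp₀ : p ≠ 0) (hp : ∀ i : ℕ, p ^ (i + 1) ≠ 1) (N : ℕ) (n : ℤ) :
    centralQBinom p (N + 1) n =
      (1 + p ^ (2 * N + 1)) * centralQBinom p N n
        + p ^ (N + 1 - n) * centralQBinom p N (n - 1)
        + p ^ (N + 1 + n) * centralQBinom p N (n + 1) := by
  set u := p ^ (N + 1 + n) with hu
  set v := p ^ (N + 1 - n) with hv
  have huv : p * p ^ (2 * N + 1) = u * v := by
    rw [hu, hv, ← zpow_add₀ hp₀, ← pow_succ', ← zpow_natCast]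
    congr 1
    push_cast
    ring
  have hw : p ^ (2 * N + 1) = u * v * p⁻¹ := by rw [eq_mul_inv_iff_mul_eq₀ hp₀, mul_comm, huv]
  have hplus : invQPochhammer p (N + n) = (1 - u) * invQPochhammer p (N + 1 + n) := by
    rw [hu, ← invQPochhammer_sub_one hp]
    congr 1
    ring
  have hminus : invQPochhammer p (N - n) = (1 - v) * invQPochhammer p (N + 1 - n) := by
    rw [hv, ← invQPochhammer_sub_one hp]
    congr 1
    ring
  have hplus' : invQPochhammer p (N + (n - 1)) = (1 - u * p⁻¹) * invQPochhammer p (N + n) := by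
    rw [hu, ← zpow_sub_one₀ hp₀, ← add_sub_assoc, invQPochhammer_sub_one hp]
    congr 3
    ring
  have hminus' : invQPochhammer p (N - (n + 1)) = (1 - v * p⁻¹) * invQPochhammer p (N - n) := by
    rw [hv, ← zpow_sub_one₀ hp₀, ← sub_sub, invQPochhammer_sub_one hp]
    congr 3
    ring
  have hsub : (N - (n - 1) : ℤ) = N + 1 - n := by ring
  have hadd : (N + (n + 1) : ℤ) = N + 1 + n := by ring
  simp only [centralQBinom]
  rw [hplus', hminus', hplus, hminus, hsub, hadd, mul_add_one, qPochhammer_succ, qPochhammer_succ,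
    Nat.cast_add_one, huv, ← pow_succ', hw]
  ring

theorem centralQBinom_succ_mul_ramanujanThetaTerm {a b : K} (hab : a * b ≠ 0)
    (hp : ∀ i : ℕ, (a * b) ^ (i + 1) ≠ 1) (N : ℕ) (n : ℤ) :
    centralQBinom (a * b) (N + 1) n * ramanujanThetaTerm (-a) (-b) n =
      (1 + (a * b) ^ (2 * N + 1)) *
          (centralQBinom (a * b) N n * ramanujanThetaTerm (-a) (-b) n)
        - a * (a * b) ^ N *
          (centralQBinom (a * b) N (n - 1) * ramanujanThetaTerm (-a) (-b) (n - 1))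
        - b * (a * b) ^ N *
          (centralQBinom (a * b) N (n + 1) * ramanujanThetaTerm (-a) (-b) (n + 1)) := by
  set p := a * b with hp_def
  have hstep (n : ℤ) : ramanujanThetaTerm (-a) (-b) (n + 1) =
      -a * p ^ n * ramanujanThetaTerm (-a) (-b) n := by
    simpa only [neg_mul_neg] using
      ramanujanThetaTerm_add_one (a := -a) (b := -b) (by rwa [neg_mul_neg]) n
  have hprev : p ^ (N + 1 - n) * ramanujanThetaTerm (-a) (-b) n =
      -(a * p ^ N) * ramanujanThetaTerm (-a) (-b) (n - 1) := by
    have hpow : p ^ (N + 1 - n) * p ^ (n - 1) = p ^ N := by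
      rw [← zpow_add₀ hab, sub_add_sub_cancel, add_sub_cancel_right, zpow_natCast]
    have h := hstep (n - 1)
    rw [sub_add_cancel] at h
    rw [h, ← hpow]
    ring
  have hnext : p ^ (N + 1 + n) * ramanujanThetaTerm (-a) (-b) n =
      -(b * p ^ N) * ramanujanThetaTerm (-a) (-b) (n + 1) := by
    rw [hstep, zpow_add₀ hab, zpow_add_one₀ hab, zpow_natCast, hp_def]
    ring
  rw [centralQBinom_succ hab hp]
  linear_combination centralQBinom p N (n - 1) * hprev + centralQBinom p N (n + 1) * hnext

theorem hasSum_centralQBinom_mul_ramanujanThetaTerm [TopologicalSpace K] [IsTopologicalRing K]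
    {a b : K} (hab : a * b ≠ 0) (hp : ∀ i : ℕ, (a * b) ^ (i + 1) ≠ 1) (N : ℕ) :
    HasSum (fun n ↦ centralQBinom (a * b) N n * ramanujanThetaTerm (-a) (-b) n)
      (qPochhammer a (a * b) N * qPochhammer b (a * b) N) := by
  induction N with
  | zero =>
    convert hasSum_ite_eq (0 : ℤ) (1 : K) using 2 with n
    · rw [centralQBinom_zero]
      split_ifs with hn
      · rw [hn, ramanujanThetaTerm_zero, one_mul]
      · rw [zero_mul]
    · simp [qPochhammer]
  | succ N ih =>
    have hcenter := ih.mul_left (1 + (a * b) ^ (2 * N + 1))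
    have hprev := ((Equiv.subRight (1 : ℤ)).hasSum_iff.mpr ih).mul_left (a * (a * b) ^ N)
    have hnext := ((Equiv.addRight (1 : ℤ)).hasSum_iff.mpr ih).mul_left (b * (a * b) ^ N)
    have hvalue : qPochhammer a (a * b) (N + 1) * qPochhammer b (a * b) (N + 1) =
        (1 + (a * b) ^ (2 * N + 1)) * (qPochhammer a (a * b) N * qPochhammer b (a * b) N)
          - a * (a * b) ^ N * (qPochhammer a (a * b) N * qPochhammer b (a * b) N)
          - b * (a * b) ^ N * (qPochhammer a (a * b) N * qPochhammer b (a * b) N) := by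
      rw [qPochhammer_succ, qPochhammer_succ]
      ring
    rw [funext (centralQBinom_succ_mul_ramanujanThetaTerm hab hp N), hvalue]
    exact (hcenter.sub hprev).sub hnext

end FiniteTripleProduct

section ThetaSeries

/-- Ramanujan's general theta function `f(a, b) = ∑_{n ∈ ℤ} a^{n(n+1)/2} b^{n(n-1)/2}`. In a normed
field the series converges for `‖a * b‖ < 1`; outside its domain of convergence it is set to `0`. -/
noncomputable def ramanujanTheta {R : Type*} [CommRing R] [TopologicalSpace R] (a b : R) : R :=
  ∑' n, ramanujanThetaTerm a b n

theorem ramanujanTheta_of_mul_eq_zero {R : Type*} [CommRing R] [TopologicalSpace R]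
    {a b : R} (hab : a * b = 0) : ramanujanTheta a b = (1 + a) * (1 + b) := by
  have hvanish (n : ℤ) (hn : n ∉ ({0, 1, -1} : Finset ℤ)) : ramanujanThetaTerm a b n = 0 := by
    simp only [mem_insert, mem_singleton, not_or] at hn
    obtain ⟨h₀, h₁, h₂⟩ := hn
    obtain ⟨i, hi⟩ := Nat.exists_eq_add_one.mpr (triangular_pos h₀ h₂)
    obtain ⟨j, hj⟩ := Nat.exists_eq_add_one.mpr (triangular_pos (n := -n) (by lia) (by lia))
    rw [ramanujanThetaTerm, hi, hj, pow_succ, pow_succ, mul_mul_mul_comm, hab, mul_zero]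
  have hsum : ∑ n ∈ ({0, 1, -1} : Finset ℤ), ramanujanThetaTerm a b n = 1 + (a + b) := by
    simp [ramanujanThetaTerm, triangular]
  rw [ramanujanTheta, tsum_eq_sum hvanish, hsum]
  linear_combination -hab

variable {𝕜 : Type*} [NormedField 𝕜]

theorem summable_norm_of_succ_eq_mul_pow_mul {u : ℕ → 𝕜} {c p : 𝕜} (hp : ‖p‖ < 1)
    (hu : ∀ n, u (n + 1) = c * p ^ n * u n) : Summable fun n ↦ ‖u n‖ := by
  have hlim : Tendsto (fun n ↦ ‖c * p ^ n‖) atTop (𝓝 0) := by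
    simpa using ((tendsto_pow_atTop_nhds_zero_of_norm_lt_one hp).const_mul c).norm
  refine summable_of_ratio_norm_eventually_le one_half_lt_one ?_
  filter_upwards [hlim.eventually_le_const one_half_pos] with n hn
  rw [norm_norm, norm_norm, hu, norm_mul]
  gcongr

theorem summable_norm_ramanujanThetaTerm {a b : 𝕜} (hab : ‖a * b‖ < 1) :
    Summable fun n ↦ ‖ramanujanThetaTerm a b n‖ := by
  refine .of_nat_of_neg ?_ ?_
  · exact summable_norm_of_succ_eq_mul_pow_mul hab fun n ↦ by
      exact_mod_cast ramanujanThetaTerm_natCast_add_one a b n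
  · simp only [ramanujanThetaTerm_neg]
    exact summable_norm_of_succ_eq_mul_pow_mul (mul_comm a b ▸ hab) fun n ↦ by
      exact_mod_cast ramanujanThetaTerm_natCast_add_one b a n

theorem summable_ramanujanThetaTerm [CompleteSpace 𝕜] {a b : 𝕜} (hab : ‖a * b‖ < 1) :
    Summable (ramanujanThetaTerm a b) :=
  .of_norm (summable_norm_ramanujanThetaTerm hab)

end ThetaSeries

section InfiniteProduct

variable {𝕜 : Type*} [NormedField 𝕜] {p : 𝕜}

theorem pow_succ_ne_one_of_norm_lt_one (hp : ‖p‖ < 1) (n : ℕ) : p ^ (n + 1) ≠ 1 := by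
  intro h
  have hlt : ‖p ^ (n + 1)‖ < 1 := norm_pow p _ ▸ pow_lt_one₀ (norm_nonneg p) hp n.succ_ne_zero
  rw [h, norm_one] at hlt
  exact hlt.false

theorem summable_norm_mul_pow (hp : ‖p‖ < 1) (x : 𝕜) : Summable fun n : ℕ ↦ ‖-(x * p ^ n)‖ := by
  simpa using (summable_geometric_of_lt_one (norm_nonneg p) hp).mul_left ‖x‖

variable [CompleteSpace 𝕜]

theorem multipliable_one_sub_mul_pow (hp : ‖p‖ < 1) (x : 𝕜) :
    Multipliable fun n : ℕ ↦ 1 - x * p ^ n := by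
  simpa only [sub_eq_add_neg] using multipliable_one_add_of_summable (summable_norm_mul_pow hp x)

theorem tendsto_qPochhammer (hp : ‖p‖ < 1) (x : 𝕜) :
    Tendsto (qPochhammer x p) atTop (𝓝 (∏' n : ℕ, (1 - x * p ^ n))) :=
  (multipliable_one_sub_mul_pow hp x).tendsto_prod_tprod_nat

theorem tprod_one_sub_mul_pow_ne_zero (hp : ‖p‖ < 1) : ∏' n : ℕ, (1 - p * p ^ n) ≠ 0 := by
  have hfactor (n : ℕ) : 1 + -(p * p ^ n) ≠ 0 := by
    rw [← sub_eq_add_neg, ← pow_succ']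
    exact sub_ne_zero.mpr (pow_succ_ne_one_of_norm_lt_one hp n).symm
  simpa only [sub_eq_add_neg] using
    tprod_one_add_ne_zero_of_summable hfactor (summable_norm_mul_pow hp p)

theorem tendsto_inv_qPochhammer (hp : ‖p‖ < 1) :
    Tendsto (fun n ↦ (qPochhammer p p n)⁻¹) atTop (𝓝 (∏' n : ℕ, (1 - p * p ^ n))⁻¹) :=
  (tendsto_qPochhammer hp p).inv₀ (tprod_one_sub_mul_pow_ne_zero hp)

theorem tendsto_invQPochhammer (hp : ‖p‖ < 1) :
    Tendsto (invQPochhammer p) atTop (𝓝 (∏' n : ℕ, (1 - p * p ^ n))⁻¹) := by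
  have htoNat : Tendsto Int.toNat atTop atTop :=
    tendsto_atTop_atTop.mpr fun n ↦ ⟨n, fun m hm ↦ by lia⟩
  refine ((tendsto_inv_qPochhammer hp).comp htoNat).congr' ?_
  filter_upwards [eventually_ge_atTop 0] with m hm
  rw [Function.comp_apply, invQPochhammer, if_pos hm]

theorem exists_norm_invQPochhammer_le (hp : ‖p‖ < 1) : ∃ C, ∀ m, ‖invQPochhammer p m‖ ≤ C := by
  obtain ⟨C, hC⟩ :=
    (Metric.isBounded_range_of_tendsto _ (tendsto_inv_qPochhammer hp)).exists_norm_le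
  rw [Set.forall_mem_range] at hC
  refine ⟨C, fun m ↦ ?_⟩
  rw [invQPochhammer]
  split_ifs
  · exact hC m.toNat
  · exact norm_zero.trans_le ((norm_nonneg _).trans (hC 0))

theorem exists_norm_centralQBinom_le (hp : ‖p‖ < 1) :
    ∃ C, ∀ N n, ‖centralQBinom p N n‖ ≤ C := by
  obtain ⟨A, hA⟩ := (Metric.isBounded_range_of_tendsto _ (tendsto_qPochhammer hp p)).exists_norm_le
  rw [Set.forall_mem_range] at hA
  obtain ⟨B, hB⟩ := exists_norm_invQPochhammer_le hp
  have hA₀ : 0 ≤ A := (norm_nonneg _).trans (hA 0)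
  have hB₀ : 0 ≤ B := (norm_nonneg _).trans (hB 0)
  refine ⟨A * (B * B), fun N n ↦ ?_⟩
  rw [centralQBinom, norm_mul, norm_mul]
  gcongr
  exacts [hA _, hB _, hB _]

theorem tendsto_centralQBinom (hp : ‖p‖ < 1) (n : ℤ) :
    Tendsto (centralQBinom p · n) atTop (𝓝 (∏' n : ℕ, (1 - p * p ^ n))⁻¹) := by
  have hdouble : Tendsto (fun N : ℕ ↦ 2 * N) atTop atTop :=
    tendsto_id.const_mul_atTop' two_pos
  have hplus : Tendsto (fun N : ℕ ↦ (N + n : ℤ)) atTop atTop :=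
    tendsto_atTop_add_const_right _ _ tendsto_natCast_atTop_atTop
  have hminus : Tendsto (fun N : ℕ ↦ (N - n : ℤ)) atTop atTop :=
    tendsto_atTop_add_const_right _ (-n) tendsto_natCast_atTop_atTop
  have hinv := tendsto_invQPochhammer hp
  have hlim :=
    ((tendsto_qPochhammer hp p).comp hdouble).mul ((hinv.comp hplus).mul (hinv.comp hminus))
  rwa [mul_inv_cancel_left₀ (tprod_one_sub_mul_pow_ne_zero hp)] at hlim

end InfiniteProduct

section TripleProduct

variable {𝕜 : Type*} [NormedField 𝕜] [CompleteSpace 𝕜] {a b : 𝕜}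

theorem jacobi_triple_product_of_mul_ne_zero (hab₀ : a * b ≠ 0) (hab : ‖a * b‖ < 1) :
    (∏' n : ℕ, (1 - a * b * (a * b) ^ n)) *
      ((∏' n : ℕ, (1 - a * (a * b) ^ n)) * ∏' n : ℕ, (1 - b * (a * b) ^ n)) =
      ramanujanTheta (-a) (-b) := by
  set E := ∏' n : ℕ, (1 - a * b * (a * b) ^ n)
  have hE₀ : E ≠ 0 := tprod_one_sub_mul_pow_ne_zero hab
  obtain ⟨C, hC⟩ := exists_norm_centralQBinom_le hab
  have hsum : Summable fun n ↦ ‖ramanujanThetaTerm (-a) (-b) n‖ :=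
    summable_norm_ramanujanThetaTerm (by rwa [neg_mul_neg])
  have hseries : Tendsto
      (fun N ↦ ∑' n, centralQBinom (a * b) N n * ramanujanThetaTerm (-a) (-b) n) atTop
      (𝓝 (∑' n, E⁻¹ * ramanujanThetaTerm (-a) (-b) n)) := by
    refine tendsto_tsum_of_dominated_convergence (hsum.mul_left C)
      (fun n ↦ (tendsto_centralQBinom hab n).mul_const _) (.of_forall fun N n ↦ ?_)
    rw [norm_mul]
    gcongr
    exact hC N n
  simp only [(hasSum_centralQBinom_mul_ramanujanThetaTerm hab₀
    (pow_succ_ne_one_of_norm_lt_one hab) _).tsum_eq, tsum_mul_left] at hseries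
  have hproduct := (tendsto_qPochhammer hab a).mul (tendsto_qPochhammer hab b)
  rw [tendsto_nhds_unique hproduct hseries, ramanujanTheta, mul_inv_cancel_left₀ hE₀]

theorem jacobi_triple_product (hab : ‖a * b‖ < 1) :
    ∏' n : ℕ, (1 - a * b * (a * b) ^ n) * (1 - a * (a * b) ^ n) * (1 - b * (a * b) ^ n) =
      ramanujanTheta (-a) (-b) := by
  by_cases hab₀ : a * b = 0
  · rw [ramanujanTheta_of_mul_eq_zero (by rwa [neg_mul_neg]), tprod_eq_mulSingle 0]
    · simp [hab₀, sub_eq_add_neg]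
    · intro n hn
      simp [hab₀, hn]
  · have hmul := multipliable_one_sub_mul_pow hab
    rw [((hmul _).mul (hmul a)).tprod_mul (hmul b), (hmul _).tprod_mul (hmul a), mul_assoc,
      jacobi_triple_product_of_mul_ne_zero hab₀ hab]

theorem tprod_one_sub_pow_eq_ramanujanTheta {q : 𝕜} (hq : ‖q‖ < 1) {k l m : ℕ} (hkl : k + l = m)
    (hm : m ≠ 0) :
    ∏' n : ℕ, (1 - q ^ (m * n + m)) * (1 - q ^ (m * n + k)) * (1 - q ^ (m * n + l)) =
      ramanujanTheta (-q ^ k) (-q ^ l) := by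
  subst hkl
  have hkl' : ‖q ^ k * q ^ l‖ < 1 := by
    rw [← pow_add, norm_pow]
    exact pow_lt_one₀ (norm_nonneg q) hq hm
  rw [← jacobi_triple_product hkl']
  refine tprod_congr fun n ↦ ?_
  ring

end TripleProduct

section VirasoroCharacters

theorem tsum_int_even_add_odd {M : Type*} [AddCommMonoid M] [TopologicalSpace M] [T2Space M]
    [ContinuousAdd M] {f : ℤ → M} (he : Summable fun k ↦ f (2 * k))
    (ho : Summable fun k ↦ f (2 * k + 1)) :
    ∑' k, f (2 * k) + ∑' k, f (2 * k + 1) = ∑' n, f n := by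
  have heven : Function.Injective fun k : ℤ ↦ 2 * k := mul_right_injective₀ two_ne_zero
  have hodd : Function.Injective fun k : ℤ ↦ 2 * k + 1 := (add_left_injective 1).comp heven
  have hcompl : IsCompl (Set.range fun k : ℤ ↦ 2 * k) (Set.range fun k : ℤ ↦ 2 * k + 1) := by
    simpa only [range_two_mul, range_two_mul_add_one] using Int.isCompl_even_odd
  exact ((heven.hasSum_range_iff.mpr he.hasSum).add_isCompl hcompl
    (hodd.hasSum_range_iff.mpr ho.hasSum)).tsum_eq.symm

theorem tsum_exchange_odd {G : Type*} [AddCommGroup G] [UniformSpace G] [IsUniformAddGroup G]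
    [CompleteSpace G] [T2Space G] {t u : ℤ → G} (ht : Summable t) (hu : Summable u) :
    ∑' k, (t (2 * k) + u (2 * k + 1)) + ∑' k, (u (2 * k) + t (2 * k + 1)) =
      ∑' n, t n + ∑' n, u n := by
  have heven : Function.Injective fun k : ℤ ↦ 2 * k := mul_right_injective₀ two_ne_zero
  have hodd : Function.Injective fun k : ℤ ↦ 2 * k + 1 := (add_left_injective 1).comp heven
  have hte : Summable fun k ↦ t (2 * k) := ht.comp_injective heven
  have hto : Summable fun k ↦ t (2 * k + 1) := ht.comp_injective hodd
  have hue : Summable fun k ↦ u (2 * k) := hu.comp_injective heven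
  have huo : Summable fun k ↦ u (2 * k + 1) := hu.comp_injective hodd
  rw [← tsum_int_even_add_odd hte hto, ← tsum_int_even_add_odd hue huo, hte.tsum_add huo,
    hue.tsum_add hto]
  abel

theorem virasoro_char_two_one_term {K : Type*} [Field K] {q : K} (hq : q ≠ 0) (k : ℤ) :
    q ^ (30 * k ^ 2) * (q ^ (7 * k) - q ^ (17 * k + 2)) =
      ramanujanThetaTerm (-q ^ 11) (-q ^ 4) (2 * k)
        + q * ramanujanThetaTerm (-q ^ 1) (-q ^ 14) (2 * k + 1) := by
  rw [ramanujanThetaTerm_neg_pow_two_mul, ramanujanThetaTerm_neg_pow_two_mul_add_one, mul_sub,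
    ← zpow_add₀ hq, ← zpow_add₀ hq, mul_neg, ← zpow_one_add₀ hq, ← sub_eq_add_neg]
  ring_nf

theorem virasoro_char_two_five_term {K : Type*} [Field K] {q : K} (hq : q ≠ 0) (k : ℤ) :
    q ^ (30 * k ^ 2) * (q ^ (-13 * k + 1) - q ^ (37 * k + 11)) =
      q * ramanujanThetaTerm (-q ^ 1) (-q ^ 14) (2 * k)
        + ramanujanThetaTerm (-q ^ 11) (-q ^ 4) (2 * k + 1) := by
  rw [ramanujanThetaTerm_neg_pow_two_mul, ramanujanThetaTerm_neg_pow_two_mul_add_one, mul_sub,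
    ← zpow_add₀ hq, ← zpow_add₀ hq, ← zpow_one_add₀ hq, ← sub_eq_add_neg]
  ring_nf

theorem virasoro_char_sum_eq_H_general {𝕜 : Type*} [NormedField 𝕜] [CompleteSpace 𝕜] {q : 𝕜}
    (hq : ‖q‖ < 1) :
    (∑' k : ℤ, q ^ (30 * k ^ 2) * (q ^ (7 * k) - q ^ (17 * k + 2)))
      + ∑' k : ℤ, q ^ (30 * k ^ 2) * (q ^ (-13 * k + 1) - q ^ (37 * k + 11)) =
    (∏' n : ℕ, (1 - q ^ (15 * n + 15)) * (1 - q ^ (15 * n + 11)) * (1 - q ^ (15 * n + 4)))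
      + q * ∏' n : ℕ,
        (1 - q ^ (15 * n + 15)) * (1 - q ^ (15 * n + 1)) * (1 - q ^ (15 * n + 14)) := by
  rcases eq_or_ne q 0 with rfl | hq₀
  · have hvanish (k : ℤ) (hk : k ≠ 0) : (0 : 𝕜) ^ (30 * k ^ 2) = 0 := zero_zpow _ (by positivity)
    rw [tsum_eq_single 0 fun k hk ↦ by rw [hvanish k hk, zero_mul],
      tsum_eq_single 0 fun k hk ↦ by rw [hvanish k hk, zero_mul]]
    simp
  have hθ (k l : ℕ) (hkl : k + l = 15) : Summable (ramanujanThetaTerm (-q ^ k) (-q ^ l)) := by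
    refine summable_ramanujanThetaTerm ?_
    rw [neg_mul_neg, ← pow_add, hkl, norm_pow]
    exact pow_lt_one₀ (norm_nonneg q) hq (Nat.succ_ne_zero 14)
  simp only [virasoro_char_two_one_term hq₀, virasoro_char_two_five_term hq₀]
  rw [tsum_exchange_odd (hθ 11 4 rfl) ((hθ 1 14 rfl).mul_left q), tsum_mul_left,
    tprod_one_sub_pow_eq_ramanujanTheta hq (k := 11) (l := 4) rfl (Nat.succ_ne_zero 14),
    tprod_one_sub_pow_eq_ramanujanTheta hq (k := 1) (l := 14) rfl (Nat.succ_ne_zero 14)]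
  rfl

end VirasoroCharacters

theorem virasoro_char_sum_eq_H (q : ℂ) (hq : ‖q‖ < 1) :
    (∑' k : ℤ, q ^ (30 * k ^ 2) * (q ^ (7 * k) - q ^ (17 * k + 2)))
      + ∑' k : ℤ, q ^ (30 * k ^ 2) * (q ^ (-13 * k + 1) - q ^ (37 * k + 11)) =
      Hf q := by
  exact virasoro_char_sum_eq_H_general hq
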